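/- Let G be a 24×24 symmetric positive definite integer matrix with even diagonal entries, determinant 1, and such that there is no x ∈ ℤ²⁴ with xᵀGx = 2 (i.e. G is a Gram matrix of the Leech lattice). Then for every point z in the complex upper half-plane, Σ_{x ∈ ℤ²⁴} exp(πi (xᵀGx) z) = E₄(z)³ − 720·Δ(z), where E₄(z) = 1 + 240 Σ_{n≥1} σ₃(n) qⁿ is the normalized weight 4 Eisenstein series and Δ(z) = q ∏_{n≥1} (1 − qⁿ)²⁴ is the discriminant cusp form of weight 12, with q = exp(2πiz). (This is the identity θ_𝓛^(1) = (E₄^(1))³ − 720Δ.) -/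

import Mathlib

/-!
Write `Q(x) = xᵀGx` and `θ(z) = ∑ₓ exp(πi Q(x) z)`. The identity holds because `θ` is a modular form
of weight 12 and level one whose `q`-expansion begins `1 + 0·q`, and such a form is determined by
these two coefficients.

*Modularity.* The lattice is even, so `θ(z + 1) = θ(z)`. The inversion formula
`θ(-1/z) = z¹² θ(z)` comes from Poisson summation for `n`-dimensional Gaussians (`gauss_poisson`).
Only the one-variable formula is available in Mathlib, so the general one is obtained by induction
on `n`: Poisson summation in the first variable leaves a Gaussian sum for the Schur complement of
the first entry, twisted by a character. The induction therefore has to carry a shift vector `c`.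
The constant in front is not tracked: in the unimodular case `x ↦ Gx` identifies the sum for `G⁻¹`
with the sum for `G`, and evaluating at `z = i`, where `θ` is a positive real number, shows that
the constant is `1`. Convergence requires `G` to be positive definite over `ℝ`, which follows from
positivity on `ℤⁿ` by density of `ℚⁿ` together with `det G ≠ 0` (`toReal_pos`). Boundedness at the
cusps follows from the convergent `q`-expansion `θ = ∑ₘ #{x | Q(x) = 2m} qᵐ` (`hasSum_theta`).

*Comparison.* The constant coefficient is `1` by positivity and the coefficient of `q` is `0` since
there are no roots. Hence `θ - E₄³` is a cusp form of weight 12, so a multiple of `Δ`, and the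
coefficient of `q` gives the factor `-720` (`eq_of_coeff`).
-/

open Matrix

open Complex

namespace LeechTheta

/-! ### Positive definite quadratic forms and convergence -/

/-- The real quadratic form `x ↦ xᵀAx`. -/
noncomputable def qf {n : ℕ} (A : Matrix (Fin n) (Fin n) ℝ) (x : Fin n → ℝ) : ℝ := x ⬝ᵥ (A *ᵥ x)

lemma qf_smul {n : ℕ} (A : Matrix (Fin n) (Fin n) ℝ) (t : ℝ) (x : Fin n → ℝ) :
    qf A (t • x) = t ^ 2 * qf A x := by
  simp [qf, mulVec_smul]; ring

lemma continuous_qf {n : ℕ} (A : Matrix (Fin n) (Fin n) ℝ) : Continuous (qf A) := by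
  unfold qf
  exact Continuous.dotProduct continuous_id (Continuous.matrix_mulVec continuous_const continuous_id)

/-- By compactness of the unit sphere a positive definite form dominates a multiple of `∑ xᵢ²`. -/
lemma qf_coercive {n : ℕ} (A : Matrix (Fin n) (Fin n) ℝ) (hA : ∀ x, x ≠ 0 → 0 < qf A x) :
    ∃ δ > 0, ∀ x, δ * ∑ i, x i ^ 2 ≤ qf A x := by
  rcases n with _ | n
  · exact ⟨1, one_pos, fun x => by simp [qf]⟩
  · have hne : (Metric.sphere (0 : Fin (n + 1) → ℝ) 1).Nonempty :=
      NormedSpace.sphere_nonempty.mpr zero_le_one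
    obtain ⟨x₀, hx₀, hmin⟩ := (isCompact_sphere (0 : Fin (n + 1) → ℝ) 1).exists_isMinOn hne
      (continuous_qf A).continuousOn
    have hx₀' : x₀ ≠ 0 := by
      rintro rfl
      simp at hx₀
    have hpos := hA x₀ hx₀'
    refine ⟨qf A x₀ / (n + 1), by positivity, fun x => ?_⟩
    rcases eq_or_ne x 0 with rfl | hx
    · simp [qf]
    have hxn : 0 < ‖x‖ := norm_pos_iff.mpr hx
    have h1 : qf A x₀ ≤ qf A (‖x‖⁻¹ • x) := hmin (by simp [norm_smul, hxn.ne'])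
    rw [qf_smul] at h1
    have h2 : ∑ i, x i ^ 2 ≤ (n + 1) * ‖x‖ ^ 2 := by
      calc ∑ i, x i ^ 2 ≤ ∑ _i : Fin (n + 1), ‖x‖ ^ 2 := by
            refine Finset.sum_le_sum fun i _ => ?_
            rw [← sq_abs]
            exact pow_le_pow_left₀ (abs_nonneg _) (norm_le_pi_norm x i) 2
        _ = _ := by simp
    calc qf A x₀ / (n + 1) * ∑ i, x i ^ 2 ≤ qf A x₀ / (n + 1) * ((n + 1) * ‖x‖ ^ 2) := by gcongr
      _ = ‖x‖ ^ 2 * qf A x₀ := by field_simp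
      _ ≤ ‖x‖ ^ 2 * (‖x‖⁻¹ ^ 2 * qf A x) := by gcongr
      _ = qf A x := by field_simp

/-- Convergence of a shifted one-variable Gaussian sum, read off from that of Jacobi's theta
function. -/
lemma summable_exp_one (k s : ℝ) (hk : 0 < k) :
    Summable fun m : ℤ => Real.exp (-k * (m - s) ^ 2) := by
  have h := (summable_jacobiTheta₂_term_iff (-I * ↑(k * s / Real.pi)) (I * ↑(k / Real.pi))).mpr
    (by simp; positivity)
  convert! (h.norm.mul_left (Real.exp (-k * s ^ 2))) using 2 with m
  rw [norm_jacobiTheta₂_term, ← Real.exp_add]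
  congr 1
  have := Real.pi_ne_zero
  simp
  field_simp
  ring

/-- Splitting off the first coordinate of an integer vector. -/
def consE (n : ℕ) : ℤ × (Fin n → ℤ) ≃ (Fin (n + 1) → ℤ) := Fin.consEquiv fun _ => ℤ

lemma consE_apply (n : ℕ) (p : ℤ × (Fin n → ℤ)) :
    consE n p = (Fin.cons p.1 p.2 : Fin (n + 1) → ℤ) := rfl

lemma summable_mul_pair {β γ : Type*} (f : β → ℝ) (g : γ → ℝ) (hf : Summable f)
    (hg : Summable g) (hf' : ∀ x, 0 ≤ f x) (hg' : ∀ x, 0 ≤ g x) :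
    Summable fun p : β × γ => f p.1 * g p.2 :=
  hf.mul_of_nonneg hg hf' hg'

lemma tsum_swap {β γ : Type*} (f : β → γ → ℂ) (h : Summable fun p : β × γ => f p.1 p.2) :
    ∑' b, ∑' c, f b c = ∑' c, ∑' b, f b c :=
  (Summable.tsum_comm (f := f) h).symm

/-! ### Poisson summation for Gaussians -/

/-- The bookkeeping of the induction step for Poisson summation: the double sums over `ℤ × X`
are interchanged, the sum over `ℤ` is transformed by `hP` and the sum over `X` by `hC`. -/
lemma tsum_swap_assemble {X : Type*} (E : ℤ → ℂ) (P : X → ℂ) (Q : X → ℤ → ℂ) (F S : ℤ → X → ℂ)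
    (k D : ℂ) (hL : Summable fun p : ℤ × X => P p.2 * Q p.2 p.1)
    (hR : Summable fun p : ℤ × X => E p.1 * S p.1 p.2)
    (hEF : Summable fun p : X × ℤ => E p.2 * F p.2 p.1)
    (hP : ∀ x, P x * ∑' m, Q x m = k * ∑' m, E m * F m x)
    (hC : ∀ m, ∑' x, F m x = D * ∑' x, S m x) :
    ∑' p : ℤ × X, P p.2 * Q p.2 p.1 = k * D * ∑' p : ℤ × X, E p.1 * S p.1 p.2 := by
  rw [hR.tsum_prod, hL.tsum_prod, tsum_swap (fun m x => P x * Q x m) hL]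
  simp only [tsum_mul_left, hP]
  rw [tsum_swap (fun x m => E m * F m x) hEF]
  simp only [tsum_mul_left, hC, mul_left_comm (E _), tsum_mul_left, mul_assoc]

lemma summable_pi_prod_step (n : ℕ) (f : Fin (n+1) → ℤ → ℝ) (h0 : ∀ i m, 0 ≤ f i m)
    (hf : ∀ i, Summable (f i)) (h : Summable fun x : Fin n → ℤ => ∏ i, f (Fin.succ i) (x i)) :
   Summable fun p : ℤ × (Fin n → ℤ) => f 0 p.1 * ∏ i, f (Fin.succ i) (p.2 i) := by
  have h3 : ∀ x : Fin n → ℤ, 0 ≤ ∏ i, f (Fin.succ i) (x i) := fun x =>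
        Finset.prod_nonneg fun i _ => h0 _ _
  have h4 : ∀ m, 0 ≤ f 0 m := h0 0
  have h5 : Summable (f 0) := hf 0
  generalize f 0 = g at h4 h5 ⊢
  generalize hg : (fun x : Fin n → ℤ => ∏ i, f (Fin.succ i) (x i)) = g' at *
  have e : (fun p : ℤ × (Fin n → ℤ) => g p.1 * ∏ i, f (Fin.succ i) (p.2 i)) = fun p => g p.1 * g' p.2 := by
    rw [← hg]
  rw [e]
  apply summable_mul_pair g g' h5 h h4 (fun x => by rw [← hg]; exact h3 x)

lemma summable_pi_prod (n : ℕ) (f : Fin n → ℤ → ℝ) (h0 : ∀ i m, 0 ≤ f i m)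
    (hf : ∀ i, Summable (f i)) : Summable fun x : Fin n → ℤ => ∏ i, f i (x i) := by
  induction n with
  | zero => exact Summable.of_finite
  | succ n ih =>
    have h2 := summable_pi_prod_step n f h0 hf
      (ih (fun i => f i.succ) (fun i => h0 _) (fun i => hf _))
    rw [← (consE n).summable_iff]
    refine h2.congr fun p => ?_
    rw [Function.comp_apply, consE_apply, Fin.prod_univ_succ]
    simp only [Fin.cons_zero, Fin.cons_succ]

lemma summable_exp_qf {n : ℕ} (A : Matrix (Fin n) (Fin n) ℝ) (hA : ∀ x, x ≠ 0 → 0 < qf A x)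
    (k : ℝ) (hk : k < 0) (s : Fin n → ℝ) :
    Summable fun x : Fin n → ℤ => Real.exp (k * qf A (fun i => x i - s i)) := by
  obtain ⟨δ, hδ, h⟩ := qf_coercive A hA
  refine Summable.of_nonneg_of_le (fun _ => (Real.exp_pos _).le) (fun x => ?_)
    (summable_pi_prod n (fun i m => Real.exp (-(-k * δ) * (m - s i) ^ 2))
      (fun _ _ => (Real.exp_pos _).le) fun i => summable_exp_one _ _ (by nlinarith))
  rw [← Real.exp_sum, Real.exp_le_exp, ← Finset.mul_sum]
  nlinarith [h (fun i => x i - s i)]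

lemma summable_cexp_qf {n : ℕ} (A : Matrix (Fin n) (Fin n) ℝ) (hA : ∀ x, x ≠ 0 → 0 < qf A x)
    (k : ℂ) (hk : k.re < 0) (s : Fin n → ℝ) :
    Summable fun x : Fin n → ℤ => ‖cexp (k * qf A (fun i => x i - s i))‖ := by
  simpa [Complex.norm_exp] using summable_exp_qf A hA k.re hk s

/-! ### Schur complements -/

lemma qf_cons {n : ℕ} (A : Matrix (Fin (n + 1)) (Fin (n + 1)) ℝ) (hs : A.IsSymm)
    (m : ℝ) (x : Fin n → ℝ) :
    qf A (Fin.cons m x) = A 0 0 * m ^ 2 + 2 * m * ((fun j => A 0 j.succ) ⬝ᵥ x)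
      + qf (A.submatrix Fin.succ Fin.succ) x := by
  have h : ∀ j : Fin n, A j.succ 0 = A 0 j.succ := fun j => hs.apply _ _
  have e1 : ∑ j : Fin n, x j * (A 0 j.succ * m) = m * ∑ j, A 0 j.succ * x j := by
    rw [Finset.mul_sum]; exact Finset.sum_congr rfl fun _ _ => by ring
  have e2 : ∑ j : Fin n, m * (A 0 j.succ * x j) = m * ∑ j, A 0 j.succ * x j := by
    rw [Finset.mul_sum]
  simp only [qf, dotProduct, mulVec, Fin.sum_univ_succ, Fin.cons_zero, Fin.cons_succ, h,
    submatrix_apply, mul_add, Finset.sum_add_distrib, Finset.mul_sum] at e1 e2 ⊢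
  simp only [← Finset.mul_sum] at e1 e2 ⊢
  linear_combination e1

/-- The Schur complement of the top left entry. -/
noncomputable def schur {n : ℕ} (A : Matrix (Fin (n + 1)) (Fin (n + 1)) ℝ) :
    Matrix (Fin n) (Fin n) ℝ :=
  A.submatrix Fin.succ Fin.succ -
    (A 0 0)⁻¹ • vecMulVec (fun j => A 0 j.succ) (fun j => A 0 j.succ)

lemma qf_schur {n : ℕ} (A : Matrix (Fin (n + 1)) (Fin (n + 1)) ℝ) (x : Fin n → ℝ) :
    qf (schur A) x = qf (A.submatrix Fin.succ Fin.succ) x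
      - (A 0 0)⁻¹ * ((fun j => A 0 j.succ) ⬝ᵥ x) ^ 2 := by
  simp only [qf, schur, sub_mulVec, smul_mulVec, vecMulVec_mulVec, sub_dotProduct,
    smul_dotProduct, op_smul_eq_smul, smul_eq_mul, dotProduct_comm x]
  ring

lemma entry_pos {n : ℕ} (A : Matrix (Fin (n + 1)) (Fin (n + 1)) ℝ) (hs : A.IsSymm)
    (hA : ∀ x, x ≠ 0 → 0 < qf A x) : 0 < A 0 0 := by
  have h := hA (Fin.cons 1 0) fun h => by simpa using congrFun h 0
  rw [qf_cons A hs] at h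
  simpa [qf] using h

/-- The Schur complement is the minimum of the form over the first coordinate, so it inherits
positivity. -/
lemma schur_pos {n : ℕ} (A : Matrix (Fin (n + 1)) (Fin (n + 1)) ℝ) (hs : A.IsSymm)
    (hA : ∀ x, x ≠ 0 → 0 < qf A x) (x : Fin n → ℝ) (hx : x ≠ 0) : 0 < qf (schur A) x := by
  have ha := entry_pos A hs hA
  have h := hA (Fin.cons (-(A 0 0)⁻¹ * ((fun j => A 0 j.succ) ⬝ᵥ x)) x) fun h => hx <| by
    funext i; simpa using congrFun h i.succ
  rw [qf_cons A hs] at h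
  rw [qf_schur]
  convert h using 1
  field_simp
  ring

lemma schur_symm {n : ℕ} (A : Matrix (Fin (n + 1)) (Fin (n + 1)) ℝ) (hs : A.IsSymm) :
    (schur A).IsSymm := by
  ext i j
  simp [schur, vecMulVec_apply, hs.apply j.succ i.succ, mul_comm]

section
variable {n : ℕ} (A B : Matrix (Fin (n + 1)) (Fin (n + 1)) ℝ)

lemma inv_block_row (hAB : A * B = 1) (j : Fin n) :
    A 0 0 * B 0 j.succ + ∑ k : Fin n, A 0 k.succ * B k.succ j.succ = 0 := by
  have h := congrFun (congrFun hAB 0) j.succ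
  simpa [Matrix.mul_apply, Fin.sum_univ_succ, (Fin.succ_ne_zero j).symm] using h

/-- The inverse of the Schur complement of `A` is the corresponding block of `B = A⁻¹`. -/
lemma schur_mul (hAB : A * B = 1) (ha : A 0 0 ≠ 0) (hs : A.IsSymm) :
    schur A * B.submatrix Fin.succ Fin.succ = 1 := by
  ext i j
  have h := congrFun (congrFun hAB i.succ) j.succ
  have h0 := inv_block_row A B hAB j
  simp only [Matrix.mul_apply, Fin.sum_univ_succ, hs.apply 0 i.succ, one_apply, Fin.succ_inj] at h
  simp only [schur, Matrix.mul_apply, Matrix.sub_apply, Matrix.smul_apply, submatrix_apply, vecMulVec_apply,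
    smul_eq_mul, sub_mul, Finset.sum_sub_distrib, one_apply]
  have e : ∑ k : Fin n, (A 0 0)⁻¹ * (A 0 i.succ * A 0 k.succ) * B k.succ j.succ
      = (A 0 0)⁻¹ * A 0 i.succ * ∑ k : Fin n, A 0 k.succ * B k.succ j.succ := by
    rw [Finset.mul_sum]; exact Finset.sum_congr rfl fun _ _ => by ring
  rw [e, ← h]
  rw [show ∑ k : Fin n, A 0 k.succ * B k.succ j.succ = -(A 0 0 * B 0 j.succ) by linarith]
  field_simp
  ring

/-- Completing the square for `B = A⁻¹` in terms of the first row of `A`. -/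
lemma qf_inv_cons (hAB : A * B = 1) (ha : A 0 0 ≠ 0) (hB : B.IsSymm) (m : ℝ) (y : Fin n → ℝ) :
    qf B (Fin.cons m y) = m ^ 2 / A 0 0 +
      qf (B.submatrix Fin.succ Fin.succ) (fun j => y j - m / A 0 0 * A 0 j.succ) := by
  rw [qf_cons B hB]
  set v : Fin n → ℝ := fun j => A 0 j.succ with hv
  set r : Fin n → ℝ := fun j => B 0 j.succ with hr
  set B' := B.submatrix Fin.succ Fin.succ with hB'
  have hB's : B'.IsSymm := hB.submatrix _
  have h1 : B' *ᵥ v = -(A 0 0) • r := by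
    funext j
    have h0 := inv_block_row A B hAB j
    have : (B' *ᵥ v) j = ∑ k : Fin n, A 0 k.succ * B k.succ j.succ := by
      simp only [mulVec, dotProduct, hB', submatrix_apply, hv]
      exact Finset.sum_congr rfl fun k _ => by rw [hB.apply k.succ j.succ, mul_comm]
    simp only [this, hr, Pi.smul_apply, smul_eq_mul]
    linarith
  have h2 : A 0 0 * B 0 0 + v ⬝ᵥ r = 1 := by
    have h := congrFun (congrFun hAB 0) 0
    simpa [Matrix.mul_apply, Fin.sum_univ_succ, hv, hr, dotProduct, hB.apply 0] using h
  have h3 : v ⬝ᵥ (B' *ᵥ y) = -(A 0 0) * (r ⬝ᵥ y) := by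
    rw [dotProduct_mulVec, ← mulVec_transpose, hB's.eq, h1, smul_dotProduct, smul_eq_mul]
  have h4 : (fun j => y j - m / A 0 0 * A 0 j.succ) = y - (m / A 0 0) • v := by
    funext j; simp [hv]
  rw [h4]
  simp only [qf, mulVec_sub, mulVec_smul, sub_dotProduct, dotProduct_sub, smul_dotProduct,
    dotProduct_smul, smul_eq_mul, h1, h3, dotProduct_comm y r]
  field_simp
  linear_combination m ^ 2 * h2

lemma inv_pos_def (hAB : A * B = 1) (hA : ∀ x, x ≠ 0 → 0 < qf A x) (y : Fin (n + 1) → ℝ)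
    (hy : y ≠ 0) : 0 < qf B y := by
  have h1 : A *ᵥ (B *ᵥ y) = y := by rw [mulVec_mulVec, hAB, one_mulVec]
  have h2 := hA (B *ᵥ y) fun h => hy <| by rw [← h1, h, mulVec_zero]
  rwa [qf, h1, dotProduct_comm] at h2
end

/-- Poisson summation for Gaussians in `n` variables, where `B = A⁻¹`. The constant `C` (which is
`1 / √det A`) depends only on `A` and `B` and is left unspecified. -/
theorem gauss_poisson (n : ℕ) (A B : Matrix (Fin n) (Fin n) ℝ) (hs : A.IsSymm)
    (hA : ∀ x, x ≠ 0 → 0 < qf A x) (hB : B.IsSymm) (hAB : A * B = 1) :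
    ∃ C : ℂ, ∀ τ : ℂ, 0 < τ.re → ∀ c : Fin n → ℝ,
      ∑' x : Fin n → ℤ, cexp (-Real.pi * τ * qf A (fun i => x i)
          + 2 * Real.pi * I * ((c ⬝ᵥ fun i => (x i : ℝ) : ℝ) : ℂ)) =
        C * (1 / τ ^ (1 / 2 : ℂ)) ^ n *
          ∑' y : Fin n → ℤ, cexp (-Real.pi / τ * qf B (fun i => y i - c i)) := by
  induction n with
  | zero => exact ⟨1, fun τ _ c => by simp [qf]⟩
  | succ n ih =>
    have ha := entry_pos A hs hA
    obtain ⟨C, hC⟩ := ih (schur A) (B.submatrix Fin.succ Fin.succ) (schur_symm A hs)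
      (schur_pos A hs hA) (hB.submatrix _) (schur_mul A B hAB ha.ne' hs)
    set a := A 0 0 with ha_def
    set v : Fin n → ℝ := fun j => A 0 j.succ with hv
    refine ⟨C * (1 / (a : ℂ) ^ (1 / 2 : ℂ)), fun τ hτ c => ?_⟩
    have hτ0 : τ ≠ 0 := by rintro rfl; simp at hτ
    have ha0 : (a : ℂ) ≠ 0 := by exact_mod_cast ha.ne'
    have hπτ : (-Real.pi * τ : ℂ).re < 0 := by
      have : (-Real.pi * τ : ℂ).re = -(Real.pi * τ.re) := by simp
      rw [this]; have := mul_pos Real.pi_pos hτ; linarith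
    have hπτ' : (-Real.pi / τ : ℂ).re < 0 := by
      have : (-Real.pi / τ : ℂ).re = -(Real.pi * (τ.re / normSq τ)) := by
        rw [div_re]; simp; ring
      rw [this]
      have := mul_pos Real.pi_pos (div_pos hτ (normSq_pos.mpr hτ0))
      linarith
    have hπτa : (-Real.pi / (τ * a) : ℂ).re < 0 := by
      rw [← div_div, div_ofReal_re]
      exact div_neg_of_neg_of_pos hπτ' ha
    set c' : Fin n → ℝ := fun j => c j.succ with hc'
    -- the one-variable Gaussian left after Poisson summation in the first variable
    set E : ℤ → ℂ := fun m => cexp (-Real.pi / (τ * a) * ((m - c 0 : ℝ) : ℂ) ^ 2) with hE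
    set F : ℤ → (Fin n → ℤ) → ℂ := fun m x =>
      cexp (-Real.pi * τ * qf (schur A) (fun i => x i) + 2 * Real.pi * I *
        (((fun j => c' j + (m - c 0) / a * v j) ⬝ᵥ fun i => (x i : ℝ) : ℝ) : ℂ)) with hF
    have hEs : Summable fun m => ‖E m‖ := by
      have := summable_exp_one (-(-Real.pi / (τ * a) : ℂ).re) (c 0) (by linarith)
      convert! this using 2 with m
      rw [hE, Complex.norm_exp, ← ofReal_pow, re_mul_ofReal, neg_neg]
    have hFn : ∀ m x, ‖F m x‖ = ‖cexp (-Real.pi * τ * qf (schur A) (fun i => x i - (0 : Fin n → ℝ) i))‖ := by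
      intro m x
      simp only [hF, Complex.norm_exp, Pi.zero_apply, sub_zero]
      congr 1
      simp
    have hFs := summable_cexp_qf (schur A) (schur_pos A hs hA) _ hπτ 0
    have hEF : Summable fun p : (Fin n → ℤ) × ℤ => E p.2 * F p.2 p.1 := by
      apply Summable.of_norm
      have := hFs.mul_of_nonneg hEs (fun _ => norm_nonneg _) (fun _ => norm_nonneg _)
      convert! this using 2 with p
      rw [norm_mul, hFn, mul_comm]
    -- left-hand side as an iterated sum
    have hL : Summable fun x : Fin (n + 1) → ℤ => cexp (-Real.pi * τ * qf A (fun i => x i)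
          + 2 * Real.pi * I * ((c ⬝ᵥ fun i => (x i : ℝ) : ℝ) : ℂ)) := by
      apply Summable.of_norm
      convert! summable_cexp_qf A hA _ hπτ 0 using 2 with x
      simp only [Complex.norm_exp, Pi.zero_apply, sub_zero]
      congr 1
      simp
    have hR : Summable fun y : Fin (n + 1) → ℤ =>
        cexp (-Real.pi / τ * qf B (fun i => y i - c i)) :=
      (summable_cexp_qf B (inv_pos_def A B hAB hA) _ hπτ' c).of_norm
    have hsplitL : ∀ (x : Fin n → ℤ) (m : ℤ),
        cexp (-Real.pi * τ * qf A (fun i => ((Fin.cons m x : Fin (n + 1) → ℤ) i : ℝ))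
          + 2 * Real.pi * I * ((c ⬝ᵥ fun i => ((Fin.cons m x : Fin (n + 1) → ℤ) i : ℝ) : ℝ) : ℂ)) =
        cexp (-Real.pi * τ * qf (A.submatrix Fin.succ Fin.succ) (fun i => x i)
          + 2 * Real.pi * I * ((c' ⬝ᵥ fun i => (x i : ℝ) : ℝ) : ℂ)) *
        cexp (-Real.pi * (τ * a) * m ^ 2 + 2 * Real.pi * (I * c 0
            - τ * ((v ⬝ᵥ fun i => (x i : ℝ) : ℝ) : ℂ)) * m) := by
      intro x m
      have h1 : (fun i => ((Fin.cons m x : Fin (n + 1) → ℤ) i : ℝ)) =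
          Fin.cons (m : ℝ) (fun i => (x i : ℝ)) := by
        funext i; refine Fin.cases ?_ (fun j => ?_) i <;> simp
      have h2 : c ⬝ᵥ (Fin.cons (m : ℝ) (fun i => (x i : ℝ)) : Fin (n + 1) → ℝ) =
          c 0 * m + c' ⬝ᵥ fun i => (x i : ℝ) := by
        simp [dotProduct, Fin.sum_univ_succ, hc']
      rw [h1, h2, qf_cons A hs, ← Complex.exp_add]
      congr 1
      push_cast
      ring
    have hqs : ∀ x, qf (schur A) x = qf (A.submatrix Fin.succ Fin.succ) x - a⁻¹ * (v ⬝ᵥ x) ^ 2 :=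
      qf_schur A
    have hqB : ∀ m y, qf B (Fin.cons m y) = m ^ 2 / a +
        qf (B.submatrix Fin.succ Fin.succ) (fun j => y j - m / a * v j) :=
      qf_inv_cons A B hAB ha.ne' hB
    have hpoisson : ∀ x : Fin n → ℤ,
        cexp (-Real.pi * τ * qf (A.submatrix Fin.succ Fin.succ) (fun i => x i)
          + 2 * Real.pi * I * ((c' ⬝ᵥ fun i => (x i : ℝ) : ℝ) : ℂ)) *
        ∑' m : ℤ, cexp (-Real.pi * (τ * a) * m ^ 2 + 2 * Real.pi * (I * c 0
            - τ * ((v ⬝ᵥ fun i => (x i : ℝ) : ℝ) : ℂ)) * m) =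
        1 / (τ * a) ^ (1 / 2 : ℂ) * ∑' m : ℤ, E m * F m x := by
      intro x
      rw [Complex.tsum_exp_neg_quadratic (by rw [re_mul_ofReal]; positivity), mul_left_comm,
        ← tsum_mul_left]
      congr 1
      refine tsum_congr fun m => ?_
      have h2 : ((fun j => c' j + (m - c 0) / a * v j) ⬝ᵥ fun i => (x i : ℝ)) =
          (c' ⬝ᵥ fun i => (x i : ℝ)) + (m - c 0) / a * (v ⬝ᵥ fun i => (x i : ℝ)) := by
        simp only [dotProduct, add_mul, Finset.sum_add_distrib, Finset.mul_sum, mul_assoc]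
      simp only [hE, hF, ← Complex.exp_add, h2, hqs]
      generalize (v ⬝ᵥ fun i => (x i : ℝ)) = w
      generalize (c' ⬝ᵥ fun i => (x i : ℝ)) = w'
      generalize qf (A.submatrix Fin.succ Fin.succ) (fun i => (x i : ℝ)) = w''
      congr 1
      push_cast
      field_simp
      ring_nf
      simp only [I_sq, I_pow_three, I_pow_four]
      ring
    have hsplitR : ∀ (m : ℤ) (y : Fin n → ℤ),
        cexp (-Real.pi / τ * qf B (fun i => ((Fin.cons m y : Fin (n + 1) → ℤ) i : ℝ) - c i)) =
        E m * cexp (-Real.pi / τ * qf (B.submatrix Fin.succ Fin.succ)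
          (fun i => y i - (c' i + (m - c 0) / a * v i))) := by
      intro m y
      have h1 : (fun i => ((Fin.cons m y : Fin (n + 1) → ℤ) i : ℝ) - c i) =
          Fin.cons ((m : ℝ) - c 0) (fun i => (y i : ℝ) - c' i) := by
        funext i; refine Fin.cases ?_ (fun j => ?_) i <;> simp [hc']
      rw [h1, hqB, hE, ← Complex.exp_add]
      simp only [sub_sub]
      generalize qf (B.submatrix Fin.succ Fin.succ) _ = w
      congr 1
      push_cast
      field_simp
      ring
    have hcpow : (τ * a) ^ (1 / 2 : ℂ) = τ ^ (1 / 2 : ℂ) * (a : ℂ) ^ (1 / 2 : ℂ) := by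
      rw [cpow_def_of_ne_zero (mul_ne_zero hτ0 ha0), cpow_def_of_ne_zero hτ0,
        cpow_def_of_ne_zero ha0, ← Complex.exp_add, Complex.log_mul_ofReal a ha τ hτ0,
        ofReal_log ha.le]
      ring_nf
    rw [← (consE n).tsum_eq fun x : Fin (n + 1) → ℤ =>
        cexp (-Real.pi * τ * qf A (fun i => x i)
          + 2 * Real.pi * I * ((c ⬝ᵥ fun i => (x i : ℝ) : ℝ) : ℂ)),
      ← (consE n).tsum_eq fun y : Fin (n + 1) → ℤ =>
        cexp (-Real.pi / τ * qf B (fun i => y i - c i))]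
    rw [← (consE n).summable_iff] at hL hR
    simp only [Function.comp_def, consE_apply] at hL hR ⊢
    simp only [hsplitR] at hR ⊢
    simp only [hsplitL] at hL ⊢
    refine (tsum_swap_assemble E
      (fun x : Fin n → ℤ => cexp (-Real.pi * τ * qf (A.submatrix Fin.succ Fin.succ) (fun i => x i)
        + 2 * Real.pi * I * ((c' ⬝ᵥ fun i => (x i : ℝ) : ℝ) : ℂ)))
      (fun (x : Fin n → ℤ) (m : ℤ) => cexp (-Real.pi * (τ * a) * m ^ 2
        + 2 * Real.pi * (I * c 0 - τ * ((v ⬝ᵥ fun i => (x i : ℝ) : ℝ) : ℂ)) * m)) F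
      (fun (m : ℤ) (y : Fin n → ℤ) => cexp (-Real.pi / τ *
        qf (B.submatrix Fin.succ Fin.succ) (fun i => y i - (c' i + (m - c 0) / a * v i))))
      (1 / (τ * a) ^ (1 / 2 : ℂ)) (C * (1 / τ ^ (1 / 2 : ℂ)) ^ n) hL hR hEF hpoisson fun m =>
      hC τ hτ (fun j => c' j + (m - c 0) / a * v j)).trans ?_
    rw [hcpow]
    congr 1
    simp only [one_div, mul_inv, pow_succ]
    ring

/-! ### The theta series of an integral form -/

/-- The real matrix with the same entries as the integer matrix `G`. -/
noncomputable def toReal {n : ℕ} (G : Matrix (Fin n) (Fin n) ℤ) : Matrix (Fin n) (Fin n) ℝ :=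
  (Int.castRingHom ℝ).mapMatrix G

lemma qf_toReal {n : ℕ} (G : Matrix (Fin n) (Fin n) ℤ) (x : Fin n → ℤ) :
    qf (toReal G) (fun i => x i) = ((x ⬝ᵥ (G *ᵥ x) : ℤ) : ℝ) := by
  simp [qf, toReal, dotProduct, mulVec]

lemma toReal_symm {n : ℕ} {G : Matrix (Fin n) (Fin n) ℤ} (h : G.IsSymm) : (toReal G).IsSymm := by
  ext i j
  simp [toReal, h.apply i j]

lemma exists_int_multiple {n : ℕ} (q : Fin n → ℚ) :
    ∃ (d : ℕ) (x : Fin n → ℤ), d ≠ 0 ∧ ∀ i, (x i : ℝ) = d * (q i : ℝ) := by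
  have hd : ∀ i, (q i).den ∣ ∏ j, (q j).den := fun i => Finset.dvd_prod_of_mem _ (Finset.mem_univ i)
  choose k hk using hd
  refine ⟨∏ j, (q j).den, fun i => (q i).num * k i, Finset.prod_ne_zero_iff.mpr fun i _ => (q i).den_ne_zero,
    fun i => ?_⟩
  rw [hk i]
  have h1 : ((q i).den : ℝ) ≠ 0 := by exact_mod_cast (q i).den_ne_zero
  have h2 : ((q i : ℚ) : ℝ) = (q i).num / (q i).den := by exact_mod_cast (Rat.num_div_den (q i)).symm
  rw [h2]
  push_cast
  field_simp

lemma toReal_nonneg {n : ℕ} (G : Matrix (Fin n) (Fin n) ℤ)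
    (hpos : ∀ x : Fin n → ℤ, x ≠ 0 → 0 < x ⬝ᵥ (G *ᵥ x)) (x : Fin n → ℝ) : 0 ≤ qf (toReal G) x := by
  have hdense : DenseRange (Pi.map fun (_ : Fin n) (q : ℚ) => (q : ℝ)) :=
    DenseRange.piMap fun _ => Rat.denseRange_cast
  refine hdense.induction_on (p := fun x => 0 ≤ qf (toReal G) x) x
    (isClosed_le continuous_const (continuous_qf _)) fun q => ?_
  obtain ⟨d, y, hd, hy⟩ := exists_int_multiple q
  have h1 : (fun i => (y i : ℝ)) = (d : ℝ) • Pi.map (fun (_ : Fin n) (q : ℚ) => (q : ℝ)) q := by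
    funext i; simp [hy]
  have h2 := qf_toReal G y
  rw [h1, qf_smul] at h2
  have h3 : 0 ≤ y ⬝ᵥ (G *ᵥ y) := by
    rcases eq_or_ne y 0 with rfl | h
    · simp
    · exact (hpos y h).le
  have h4 : (0 : ℝ) < (d : ℝ) ^ 2 := by positivity
  have h5 : (0 : ℝ) ≤ ((y ⬝ᵥ (G *ᵥ y) : ℤ) : ℝ) := by exact_mod_cast h3
  rw [← h2] at h5
  exact nonneg_of_mul_nonneg_right h5 h4

/-- An integral form that is positive on nonzero integer vectors is positive semidefinite over `ℝ`
by density of `ℚⁿ`; the determinant condition excludes a kernel. -/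
lemma toReal_pos {n : ℕ} (G : Matrix (Fin n) (Fin n) ℤ) (hsymm : G.IsSymm)
    (hpos : ∀ x : Fin n → ℤ, x ≠ 0 → 0 < x ⬝ᵥ (G *ᵥ x)) (hdet : G.det = 1)
    (x : Fin n → ℝ) (hx : x ≠ 0) : 0 < qf (toReal G) x := by
  have hpsd : (toReal G).PosSemidef := Matrix.PosSemidef.of_dotProduct_mulVec_nonneg
    (by rw [IsHermitian, conjTranspose_eq_transpose_of_trivial]; exact toReal_symm hsymm)
    (fun x => by simpa [qf] using toReal_nonneg G hpos x)
  have hdet' : (toReal G).det = 1 := by rw [toReal, ← RingHom.map_det, hdet, map_one]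
  have hpd := hpsd.posDef_iff_isUnit.mpr ((Matrix.isUnit_iff_isUnit_det _).mpr (by rw [hdet']; exact isUnit_one))
  simpa [qf] using (posDef_iff_dotProduct_mulVec.mp hpd).2 hx

/-- The theta series of the integral form `G`. -/
noncomputable def theta {n : ℕ} (G : Matrix (Fin n) (Fin n) ℤ) (z : ℂ) : ℂ :=
  ∑' x : Fin n → ℤ, cexp (Real.pi * I * ((x ⬝ᵥ (G *ᵥ x) : ℤ) : ℂ) * z)

lemma summable_norm_theta {n : ℕ} (G : Matrix (Fin n) (Fin n) ℤ) (hsymm : G.IsSymm)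
    (hpos : ∀ x : Fin n → ℤ, x ≠ 0 → 0 < x ⬝ᵥ (G *ᵥ x)) (hdet : G.det = 1) (ε : ℝ) (hε : 0 < ε) :
    Summable fun x : Fin n → ℤ => Real.exp (-Real.pi * ε * ((x ⬝ᵥ (G *ᵥ x) : ℤ) : ℝ)) := by
  have := summable_exp_qf (toReal G) (toReal_pos G hsymm hpos hdet) (-Real.pi * ε)
    (by nlinarith [Real.pi_pos]) 0
  simpa only [Pi.zero_apply, sub_zero, qf_toReal] using this

lemma norm_theta_term (m : ℤ) (z : ℂ) :
    ‖cexp (Real.pi * I * (m : ℂ) * z)‖ = Real.exp (-Real.pi * z.im * m) := by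
  rw [Complex.norm_exp]
  congr 1
  simp
  ring

lemma theta_one_ne_zero {n : ℕ} (G : Matrix (Fin n) (Fin n) ℤ) (hsymm : G.IsSymm)
    (hpos : ∀ x : Fin n → ℤ, x ≠ 0 → 0 < x ⬝ᵥ (G *ᵥ x)) (hdet : G.det = 1) : theta G I ≠ 0 := by
  have h : theta G I =
      ((∑' x : Fin n → ℤ, Real.exp (-Real.pi * 1 * ((x ⬝ᵥ (G *ᵥ x) : ℤ) : ℝ)) : ℝ) : ℂ) := by
    rw [theta, ofReal_tsum]
    refine tsum_congr fun x => ?_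
    rw [ofReal_exp]
    congr 1
    push_cast
    linear_combination (Real.pi * ((x ⬝ᵥ (G *ᵥ x) : ℤ) : ℂ)) * I_mul_I
  rw [h, ofReal_ne_zero]
  exact ((summable_norm_theta G hsymm hpos hdet 1 one_pos).tsum_pos
    (fun _ => (Real.exp_pos _).le) 0 (Real.exp_pos _)).ne'

/-- For unimodular `G` the map `x ↦ Gx` permutes the integer vectors and turns the form of `G⁻¹`
into the form of `G`. -/
lemma tsum_inv_form {n : ℕ} (G : Matrix (Fin n) (Fin n) ℤ) (hdet : G.det = 1) (F : ℤ → ℂ) :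
    ∑' y : Fin n → ℤ, F (y ⬝ᵥ (G⁻¹ *ᵥ y)) = ∑' x : Fin n → ℤ, F (x ⬝ᵥ (G *ᵥ x)) := by
  have hu : IsUnit G.det := by rw [hdet]; exact isUnit_one
  let e : (Fin n → ℤ) ≃ (Fin n → ℤ) :=
    { toFun := fun x => G *ᵥ x
      invFun := fun y => G⁻¹ *ᵥ y
      left_inv := fun x => by simp [mulVec_mulVec, nonsing_inv_mul G hu]
      right_inv := fun y => by simp [mulVec_mulVec, mul_nonsing_inv G hu] }
  rw [← e.tsum_eq fun y : Fin n → ℤ => F (y ⬝ᵥ (G⁻¹ *ᵥ y))]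
  refine tsum_congr fun x => ?_
  show F ((G *ᵥ x) ⬝ᵥ (G⁻¹ *ᵥ (G *ᵥ x))) = _
  rw [mulVec_mulVec, nonsing_inv_mul G hu, one_mulVec, dotProduct_comm]

lemma theta_S (G : Matrix (Fin 24) (Fin 24) ℤ) (hsymm : G.IsSymm)
    (hpos : ∀ x : Fin 24 → ℤ, x ≠ 0 → 0 < x ⬝ᵥ (G *ᵥ x)) (hdet : G.det = 1) (z : ℂ)
    (hz : 0 < z.im) : theta G (-z⁻¹) = z ^ 12 * theta G z := by
  have hu : IsUnit G.det := by rw [hdet]; exact isUnit_one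
  have hinv : (G⁻¹).IsSymm := by rw [IsSymm, transpose_nonsing_inv, hsymm.eq]
  obtain ⟨C, hC⟩ := gauss_poisson 24 (toReal G) (toReal G⁻¹) (toReal_symm hsymm)
    (toReal_pos G hsymm hpos hdet) (toReal_symm hinv)
    (by rw [toReal, toReal, ← map_mul, mul_nonsing_inv G hu, map_one])
  have key : ∀ w : ℂ, 0 < w.im → theta G w = C * (w ^ 12)⁻¹ * theta G (-w⁻¹) := by
    intro w hw
    have hw0 : w ≠ 0 := by rintro rfl; simp at hw
    have hτ0 : -I * w ≠ 0 := mul_ne_zero (neg_ne_zero.mpr I_ne_zero) hw0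
    have h := hC (-I * w) (by simpa using hw) 0
    have hI : (1 / (-I * w) ^ (1 / 2 : ℂ)) ^ 24 = (w ^ 12)⁻¹ := by
      rw [one_div, inv_pow, show (24 : ℕ) = 2 * 12 from rfl, pow_mul, ← Complex.cpow_nat_mul]
      rw [show ((2 : ℕ) : ℂ) * (1 / 2) = 1 by norm_num, cpow_one, mul_pow]
      congr 1
      rw [show (-I : ℂ) ^ 12 = ((-I) ^ 2) ^ 6 by ring, neg_sq, I_sq]
      norm_num
    rw [hI] at h
    have h1 : ∀ m : ℤ, cexp (-Real.pi / (-I * w) * ((m : ℝ) : ℂ)) = cexp (Real.pi * I * m * (-w⁻¹)) := by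
      intro m
      congr 1
      field_simp
      rw [I_sq]
      simp
    have h2 : ∀ m : ℤ, cexp (-Real.pi * (-I * w) * ((m : ℝ) : ℂ)) = cexp (Real.pi * I * m * w) := by
      intro m
      congr 1
      push_cast
      ring
    simp only [zero_dotProduct, ofReal_zero, mul_zero, add_zero, Pi.zero_apply, sub_zero,
      qf_toReal, h1, h2] at h
    rw [tsum_inv_form G hdet fun m => cexp (Real.pi * I * m * (-w⁻¹))] at h
    exact h
  have hC1 : C = 1 := by
    have h := key I (by simp)
    have h0 := theta_one_ne_zero G hsymm hpos hdet
    rw [show (I : ℂ) ^ 12 = ((I) ^ 2) ^ 6 by ring, I_sq, inv_I, neg_neg] at h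
    norm_num at h
    exact mul_right_cancel₀ h0 (by rw [one_mul]; exact h.symm)
  have hz0 : z ≠ 0 := by rintro rfl; simp at hz
  rw [key z hz, hC1]
  field_simp

lemma even_form (G : Matrix (Fin 24) (Fin 24) ℤ) (hsymm : G.IsSymm) (heven : ∀ i, 2 ∣ G i i)
    (x : Fin 24 → ℤ) : (2 : ℤ) ∣ x ⬝ᵥ (G *ᵥ x) := by
  rw [← Finset.univ_sum_single x]
  refine Finset.sum_induction _ (fun y => (2 : ℤ) ∣ y ⬝ᵥ (G *ᵥ y)) (fun y w hy hw => ?_)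
    (by simp) (fun i _ => ?_)
  · have h : w ⬝ᵥ (G *ᵥ y) = y ⬝ᵥ (G *ᵥ w) := by
      rw [dotProduct_mulVec, ← mulVec_transpose, hsymm.eq, dotProduct_comm]
    rw [mulVec_add, add_dotProduct, dotProduct_add, dotProduct_add, h]
    omega
  · simp only [single_dotProduct, mulVec_single, Pi.smul_apply, MulOpposite.smul_eq_mul_unop]
    simpa using Dvd.dvd.mul_left (Dvd.dvd.mul_right (heven i) _) _

lemma theta_T (G : Matrix (Fin 24) (Fin 24) ℤ) (hsymm : G.IsSymm) (heven : ∀ i, 2 ∣ G i i) (z : ℂ) :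
    theta G (1 + z) = theta G z := by
  refine tsum_congr fun x => ?_
  obtain ⟨k, hk⟩ := even_form G hsymm heven x
  rw [hk, Complex.exp_eq_exp_iff_exists_int]
  exact ⟨k, by push_cast; ring⟩

lemma theta_differentiableOn {n : ℕ} (G : Matrix (Fin n) (Fin n) ℤ) (hsymm : G.IsSymm)
    (hpos : ∀ x : Fin n → ℤ, x ≠ 0 → 0 < x ⬝ᵥ (G *ᵥ x)) (hdet : G.det = 1) :
    DifferentiableOn ℂ (theta G) {z : ℂ | 0 < z.im} := by
  intro z hz
  have hz' : 0 < z.im := hz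
  have hopen : IsOpen {w : ℂ | z.im / 2 < w.im} := isOpen_lt continuous_const continuous_im
  have h := differentiableOn_tsum_of_summable_norm
    (F := fun (x : Fin n → ℤ) (w : ℂ) => cexp (Real.pi * I * ((x ⬝ᵥ (G *ᵥ x) : ℤ) : ℂ) * w))
    (summable_norm_theta G hsymm hpos hdet (z.im / 2) (by positivity))
    (fun x => by fun_prop) hopen (fun x w hw => by
      rw [norm_theta_term, Real.exp_le_exp]
      have h0 : 0 ≤ x ⬝ᵥ (G *ᵥ x) := by
        rcases eq_or_ne x 0 with rfl | h
        · simp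
        · exact (hpos x h).le
      have h1 : (0 : ℝ) ≤ ((x ⬝ᵥ (G *ᵥ x) : ℤ) : ℝ) := by exact_mod_cast h0
      have hw' : z.im / 2 < w.im := hw
      have h2 := mul_le_mul_of_nonneg_right hw'.le (mul_nonneg Real.pi_pos.le h1)
      nlinarith)
  have hmem : z ∈ {w : ℂ | z.im / 2 < w.im} := by
    show z.im / 2 < z.im
    linarith
  exact (h.differentiableAt (hopen.mem_nhds hmem)).differentiableWithinAt

/-- Half the value of the form, the exponent of `q` in the theta series. -/
def halfNorm (G : Matrix (Fin 24) (Fin 24) ℤ) (x : Fin 24 → ℤ) : ℕ := (x ⬝ᵥ (G *ᵥ x)).toNat / 2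

lemma two_mul_halfNorm (G : Matrix (Fin 24) (Fin 24) ℤ) (hsymm : G.IsSymm)
    (hpos : ∀ x : Fin 24 → ℤ, x ≠ 0 → 0 < x ⬝ᵥ (G *ᵥ x)) (heven : ∀ i, 2 ∣ G i i)
    (x : Fin 24 → ℤ) : x ⬝ᵥ (G *ᵥ x) = 2 * (halfNorm G x : ℤ) := by
  have h0 : 0 ≤ x ⬝ᵥ (G *ᵥ x) := by
    rcases eq_or_ne x 0 with rfl | h
    · simp
    · exact (hpos x h).le
  have := even_form G hsymm heven x
  unfold halfNorm
  omega

/-- The number of vectors `x` with `xᵀGx = 2m`, as a complex number. -/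
noncomputable def thetaCoeff (G : Matrix (Fin 24) (Fin 24) ℤ) (m : ℕ) : ℂ :=
  ∑' _x : {x : Fin 24 → ℤ // halfNorm G x = m}, (1 : ℂ)

lemma hasSum_theta (G : Matrix (Fin 24) (Fin 24) ℤ) (hsymm : G.IsSymm)
    (hpos : ∀ x : Fin 24 → ℤ, x ≠ 0 → 0 < x ⬝ᵥ (G *ᵥ x)) (heven : ∀ i, 2 ∣ G i i)
    (hdet : G.det = 1) (τ : UpperHalfPlane) :
    HasSum (fun m => thetaCoeff G m • Function.Periodic.qParam 1 (τ : ℂ) ^ m) (theta G τ) := by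
  have hterm : ∀ x : Fin 24 → ℤ, cexp (Real.pi * I * ((x ⬝ᵥ (G *ᵥ x) : ℤ) : ℂ) * τ) =
      Function.Periodic.qParam 1 (τ : ℂ) ^ halfNorm G x := by
    intro x
    rw [two_mul_halfNorm G hsymm hpos heven, Function.Periodic.qParam, ← Complex.exp_nat_mul]
    congr 1
    push_cast
    ring
  have hs : HasSum (fun x : Fin 24 → ℤ => Function.Periodic.qParam 1 (τ : ℂ) ^ halfNorm G x)
      (theta G τ) := by
    have h1 : Summable fun x : Fin 24 → ℤ => cexp (Real.pi * I * ((x ⬝ᵥ (G *ᵥ x) : ℤ) : ℂ) * τ) := by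
      apply Summable.of_norm
      simp only [norm_theta_term]
      exact summable_norm_theta G hsymm hpos hdet _ τ.im_pos
    have := h1.hasSum
    simpa only [theta, hterm] using this
  have hs' := (Equiv.sigmaFiberEquiv (halfNorm G)).hasSum_iff.mpr hs
  have hs'' := hs'.sigma (fun m => (hs'.summable.sigma_factor m).hasSum)
  have hfib : ∀ m, thetaCoeff G m • Function.Periodic.qParam 1 (τ : ℂ) ^ m =
      ∑' x : {x : Fin 24 → ℤ // halfNorm G x = m},
        Function.Periodic.qParam 1 (τ : ℂ) ^ halfNorm G x := by
    intro m
    rw [thetaCoeff, smul_eq_mul, ← tsum_mul_right]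
    exact tsum_congr fun x => by rw [x.2, one_mul]
  simp only [hfib]
  exact hs''

lemma thetaCoeff_zero (G : Matrix (Fin 24) (Fin 24) ℤ) (hsymm : G.IsSymm)
    (hpos : ∀ x : Fin 24 → ℤ, x ≠ 0 → 0 < x ⬝ᵥ (G *ᵥ x)) (heven : ∀ i, 2 ∣ G i i) :
    thetaCoeff G 0 = 1 := by
  let x0 : {x : Fin 24 → ℤ // halfNorm G x = 0} := ⟨0, by simp [halfNorm]⟩
  have : Unique {x : Fin 24 → ℤ // halfNorm G x = 0} :=
    { default := x0
      uniq := fun ⟨x, hx⟩ => by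
        apply Subtype.ext
        by_contra hne
        have h1 := hpos x hne
        rw [two_mul_halfNorm G hsymm hpos heven, hx] at h1
        simp at h1 }
  rw [thetaCoeff]
  simp

lemma thetaCoeff_one (G : Matrix (Fin 24) (Fin 24) ℤ) (hsymm : G.IsSymm)
    (hpos : ∀ x : Fin 24 → ℤ, x ≠ 0 → 0 < x ⬝ᵥ (G *ᵥ x)) (heven : ∀ i, 2 ∣ G i i)
    (hroot : ¬ ∃ x : Fin 24 → ℤ, x ⬝ᵥ (G *ᵥ x) = 2) : thetaCoeff G 1 = 0 := by
  have : IsEmpty {x : Fin 24 → ℤ // halfNorm G x = 1} :=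
    ⟨fun ⟨x, hx⟩ => hroot ⟨x, by rw [two_mul_halfNorm G hsymm hpos heven, hx]; rfl⟩⟩
  rw [thetaCoeff, tsum_empty]

/-! ### Comparison with `E₄³ - 720 Δ` in weight 12 -/

section LevelOne

open UpperHalfPlane hiding I
open ModularForm SlashInvariantForm ModularFormClass MatrixGroups EisensteinSeries

lemma theta_slash_S (G : Matrix (Fin 24) (Fin 24) ℤ) (hsymm : G.IsSymm)
    (hpos : ∀ x : Fin 24 → ℤ, x ≠ 0 → 0 < x ⬝ᵥ (G *ᵥ x)) (hdet : G.det = 1) :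
    ((fun τ : ℍ => theta G τ) ∣[(12 : ℤ)] ModularGroup.S) = fun τ : ℍ => theta G τ := by
  ext z
  suffices theta G (-(↑z)⁻¹) * ((z : ℂ) ^ 12)⁻¹ = theta G z by
    rw [SL_slash_apply, ModularGroup.denom_S, UpperHalfPlane.modular_S_smul]
    simpa using this
  rw [theta_S G hsymm hpos hdet z z.im_pos]
  field_simp [z.ne_zero]

lemma theta_slash_T (G : Matrix (Fin 24) (Fin 24) ℤ) (hsymm : G.IsSymm) (heven : ∀ i, 2 ∣ G i i) :
    ((fun τ : ℍ => theta G τ) ∣[(12 : ℤ)] ModularGroup.T) = fun τ : ℍ => theta G τ := by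
  ext z
  rw [SL_slash_apply, ModularGroup.denom_apply, modular_T_smul]
  simp [theta_T G hsymm heven, ModularGroup.T]

/-- The theta series of an even unimodular form of rank 24, as a modular form of weight 12. -/
noncomputable def thetaForm (G : Matrix (Fin 24) (Fin 24) ℤ) (hsymm : G.IsSymm)
    (hpos : ∀ x : Fin 24 → ℤ, x ≠ 0 → 0 < x ⬝ᵥ (G *ᵥ x)) (heven : ∀ i, 2 ∣ G i i)
    (hdet : G.det = 1) : ModularForm 𝒮ℒ 12 where
  toFun := fun τ : ℍ => theta G τ
  slash_action_eq' A hA := by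
    obtain ⟨A, rfl⟩ := hA
    exact slash_action_generators_SL2Z (theta_slash_S G hsymm hpos hdet)
      (theta_slash_T G hsymm heven) A
  holo' := by
    rw [UpperHalfPlane.mdifferentiable_iff]
    refine (theta_differentiableOn G hsymm hpos hdet).congr fun z hz => ?_
    simp [ofComplex_apply_of_im_pos hz]
  bdd_at_cusps' hc := by
    rw [Subgroup.IsArithmetic.isCusp_iff_isCusp_SL2Z] at hc
    rw [OnePoint.isBoundedAt_iff_forall_SL2Z hc]
    intro γ _
    rw [slash_action_generators_SL2Z (theta_slash_S G hsymm hpos hdet)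
      (theta_slash_T G hsymm heven)]
    exact isBoundedAtImInfty_of_hasSum_qExpansion one_pos
      (hasSum_theta G hsymm hpos heven hdet)

lemma thetaForm_coeff (G : Matrix (Fin 24) (Fin 24) ℤ) (hsymm : G.IsSymm)
    (hpos : ∀ x : Fin 24 → ℤ, x ≠ 0 → 0 < x ⬝ᵥ (G *ᵥ x)) (heven : ∀ i, 2 ∣ G i i)
    (hdet : G.det = 1) (m : ℕ) :
    (qExpansion 1 (thetaForm G hsymm hpos heven hdet)).coeff m = thetaCoeff G m :=
  (ModularFormClass.qExpansion_coeff_unique one_pos one_mem_strictPeriods_SL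
    (f := thetaForm G hsymm hpos heven hdet) (hasSum_theta G hsymm hpos heven hdet) m).symm

/-- A weight 12 form of level one whose first two `q`-expansion coefficients are `1` and `0` is
`E₄³ - 720 Δ`. -/
lemma eq_of_coeff (f : ModularForm 𝒮ℒ 12) (h0 : (qExpansion 1 f).coeff 0 = 1)
    (h1 : (qExpansion 1 f).coeff 1 = 0) (z : ℍ) :
    f z = E₄ z ^ 3 - 720 * ModularForm.discriminant z := by
  set F : ModularForm 𝒮ℒ 12 := f - ModularForm.mcast (by decide) (E₄.pow 3) with hF
  have hFz : F z = f z - E₄ z ^ 3 := by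
    simp only [hF, coe_mcast, coe_pow, _root_.sub_apply, Pi.pow_apply]
  have hFq : qExpansion 1 F = qExpansion 1 f - qExpansion 1 E₄ * qExpansion 1 E₄ * qExpansion 1 E₄ := by
    simp only [hF, FunLike.coe_sub, coe_mcast,
      ModularForm.qExpansion_sub one_pos one_mem_strictPeriods_SL,
      ModularForm.qExpansion_pow one_pos one_mem_strictPeriods_SL]
    ring
  have hcusp : IsCuspForm F := by
    simp [isCuspForm_iff_coeffZero_eq_zero, hFq,
      PowerSeries.coeff_mul, -PowerSeries.coeff_zero_eq_constantCoeff,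
      E_qExpansion_coeff_zero _ ⟨2, rfl⟩, h0]
  have hF1 : (qExpansion 1 F).coeff 1 = -720 := by
    rw [hFq]
    norm_num [PowerSeries.coeff_mul, Finset.Nat.antidiagonal_succ, E₄_qExpansion_coeff_one,
      E_qExpansion_coeff_zero _ ⟨2, rfl⟩, h1]
  obtain ⟨g, hg⟩ := hcusp
  obtain ⟨c, hc⟩ := CuspForm.exists_smul_discriminant_of_weight_eq_twelve g
  have hgE : (g : ℍ → ℂ) = F := congrArg DFunLike.coe hg
  have hc_eq : c = -720 := by
    have hcΔ : (c • CuspForm.discriminant : ℍ → ℂ) = g := congrArg DFunLike.coe hc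
    have hgΔ := ModularForm.qExpansion_smul one_pos one_mem_strictPeriods_SL c
      CuspForm.discriminant
    rw [hcΔ, hgE] at hgΔ
    simpa [PowerSeries.coeff_smul, discriminant_qExpansion_coeff_one, hF1]
      using (congr_arg (·.coeff 1) hgΔ).symm
  have h720 : (-720 : ℂ) * ModularForm.discriminant z = f z - E₄ z ^ 3 := by
    rw [← hc_eq, show c * ModularForm.discriminant z = (c • CuspForm.discriminant) z from rfl, hc,
      congr_fun hgE z, hFz]
  linear_combination -h720

lemma E₄_eq (z : ℍ) : E₄ z = 1 + 240 * ∑' n : ℕ, (∑ d ∈ (n + 1).divisors, (d : ℂ) ^ 3) *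
    cexp (2 * Real.pi * Complex.I * z) ^ (n + 1) := by
  have h := EisensteinSeries.q_expansion_bernoulli (k := 4) (by norm_num) ⟨2, rfl⟩ z
  have hb : bernoulli 4 = -1 / 30 := by decide +kernel
  rw [hb] at h
  rw [← tsum_pnat_eq_tsum_succ (f := fun n => (∑ d ∈ n.divisors, (d : ℂ) ^ 3) *
    cexp (2 * Real.pi * Complex.I * z) ^ n)]
  refine h.trans ?_
  norm_num [ArithmeticFunction.sigma_apply]

lemma discriminant_eq (z : ℍ) : ModularForm.discriminant z =
    cexp (2 * Real.pi * Complex.I * z) *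
      ∏' n : ℕ, (1 - cexp (2 * Real.pi * Complex.I * z) ^ (n + 1)) ^ 24 := by
  rw [ModularForm.discriminant_eq_q_prod]
  simp [ModularForm.eta_q, Function.Periodic.qParam]

end LevelOne

end LeechTheta

/-- `θ_𝓛^{(1)} = (E₄)³ − 720Δ`: for a Gram matrix `G` of the Leech lattice and any
point `z` of the upper half-plane, with `q = exp(2πiz)`,
`Σ_{x ∈ ℤ²⁴} exp(πi (xᵀGx) z) = (1 + 240 Σ_{n≥1} σ₃(n) qⁿ)³ − 720 · q ∏_{n≥1} (1 − qⁿ)²⁴`. -/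
theorem theta_leech_degree_one_eq_E4_cubed_sub_720_delta
    (G : Matrix (Fin 24) (Fin 24) ℤ)
    (hsymm : G.IsSymm)
    (hpos : ∀ x : Fin 24 → ℤ, x ≠ 0 → 0 < x ⬝ᵥ (G *ᵥ x))
    (heven : ∀ i, 2 ∣ G i i)
    (hdet : G.det = 1)
    (hroot : ¬ ∃ x : Fin 24 → ℤ, x ⬝ᵥ (G *ᵥ x) = 2)
    (z : ℂ) (hz : 0 < z.im) :
    ∑' x : Fin 24 → ℤ,
        Complex.exp (Real.pi * Complex.I * ((x ⬝ᵥ (G *ᵥ x) : ℤ) : ℂ) * z) =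
      (1 + 240 * ∑' n : ℕ,
          (∑ d ∈ (n + 1).divisors, (d : ℂ) ^ 3) *
            Complex.exp (2 * Real.pi * Complex.I * z) ^ (n + 1)) ^ 3 -
      720 * (Complex.exp (2 * Real.pi * Complex.I * z) *
        ∏' n : ℕ, (1 - Complex.exp (2 * Real.pi * Complex.I * z) ^ (n + 1)) ^ 24) := by
  -- `theta G z` unfolds to the left-hand side and `E₄`, `Δ` to the explicit series and product.
  have h := LeechTheta.eq_of_coeff (LeechTheta.thetaForm G hsymm hpos heven hdet)
    ((LeechTheta.thetaForm_coeff G hsymm hpos heven hdet 0).trans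
      (LeechTheta.thetaCoeff_zero G hsymm hpos heven))
    ((LeechTheta.thetaForm_coeff G hsymm hpos heven hdet 1).trans
      (LeechTheta.thetaCoeff_one G hsymm hpos heven hroot)) ⟨z, hz⟩
  rw [LeechTheta.E₄_eq, LeechTheta.discriminant_eq] at h
  exact h
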